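/- arXiv:0907.4230 — 4 statements merged into one kernel-verified Lean document; each statement's English description precedes it below -/
import Mathlib

section
/- For every integer k ≥ 2 and positive integers v, b, a (v,b,2,k)-combinatorial configuration exists if and only if there exists a connected k-regular simple graph with b vertices and v edges. -/
open SimpleGraph

/-- A `(v, b, r, k)`-combinatorial configuration: a bipartite simple graph on
`Fin v ⊕ Fin b` (left part `Fin v`, right part `Fin b`), connected (here:
preconnected, so that the empty graph counts as a configuration), where every
left vertex has degree `r`, every right vertex has degree `k`, and there is no
cycle of length `4`. -/
def IsConfiguration (v b r k : ℕ) (G : SimpleGraph (Fin v ⊕ Fin b)) : Prop :=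
  (∀ i j : Fin v, ¬ G.Adj (Sum.inl i) (Sum.inl j)) ∧
  (∀ i j : Fin b, ¬ G.Adj (Sum.inr i) (Sum.inr j)) ∧
  G.Preconnected ∧
  (∀ i : Fin v, (G.neighborSet (Sum.inl i)).ncard = r) ∧
  (∀ j : Fin b, (G.neighborSet (Sum.inr j)).ncard = k) ∧
  (∀ (x : Fin v ⊕ Fin b) (c : G.Walk x x), c.IsCycle → c.length ≠ 4)

/-- The tuple `(v, b, r, k)` is configurable if a `(v,b,r,k)`-combinatorial
configuration exists. -/
def Configurable (v b r k : ℕ) : Prop :=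
  ∃ G : SimpleGraph (Fin v ⊕ Fin b), IsConfiguration v b r k G

/-- `D r k` is the set of `d ∈ ℕ` such that
`(d·k/gcd(r,k), d·r/gcd(r,k), r, k)` is configurable. -/
def D (r k : ℕ) : Set ℕ :=
  {d | Configurable (d * k / Nat.gcd r k) (d * r / Nat.gcd r k) r k}

/-! A point of degree `2` is an unordered pair of distinct blocks, so a bipartite graph with
left degrees `2` is the incidence graph of a loopless family `e` of unordered pairs. Two points
on the same two blocks form a `4`-cycle, so excluding `4`-cycles makes `e` injective, i.e. an
enumeration of the edges of a simple graph on the blocks. That graph has the same degrees at the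
blocks, and is connected exactly when the incidence graph, its subdivision, is. -/

open Function Set

variable {V B : Type*}

section ReachabilityAndFourCycles

variable {G : SimpleGraph V} {H : SimpleGraph B}

theorem reachable_map_of_forall_adj (f : V → B)
    (hf : ∀ ⦃x y⦄, G.Adj x y → H.Reachable (f x) (f y)) {x y : V} (h : G.Reachable x y) :
    H.Reachable (f x) (f y) := by
  rw [reachable_iff_reflTransGen] at h ⊢
  exact h.lift' f fun _ _ hxy => (reachable_iff_reflTransGen _ _).1 (hf hxy)

theorem forall_isCycle_length_ne_four_iff :
    (∀ (x : V) (c : G.Walk x x), c.IsCycle → c.length ≠ 4) ↔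
      ∀ ⦃x x' y y' : V⦄, G.Adj x y → G.Adj x y' → G.Adj x' y → G.Adj x' y' →
        x = x' ∨ y = y' := by
  constructor
  · intro hG x x' y y' hxy hxy' hx'y hx'y'
    by_contra! hne
    refine hG x (.cons hxy (.cons hx'y.symm (.cons hx'y' (.cons hxy'.symm .nil)))) ?_ rfl
    simp [Walk.cons_isCycle_iff, Walk.cons_isPath_iff, hne, hne.1.symm, hxy.ne.symm,
      hx'y.ne.symm, hxy'.ne.symm, hx'y'.ne]
  · intro hG x c hc hlen
    match c, hc, hlen with
    | .cons hxy (.cons hyx' (.cons hx'y' (.cons hy'x .nil))), hc, _ =>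
      rw [Walk.cons_isCycle_iff] at hc
      obtain rfl | rfl := hG hxy hy'x.symm hyx'.symm hx'y' <;> simp [Walk.cons_isPath_iff] at hc

end ReachabilityAndFourCycles

theorem encard_eq_natCast_iff {s : Set V} [Finite s] {n : ℕ} : s.encard = n ↔ s.ncard = n := by
  rw [← s.toFinite.cast_ncard_eq, Nat.cast_inj]

theorem encard_coe_sym2_eq_two_iff {s : Sym2 B} : (s : Set B).encard = 2 ↔ ¬ s.IsDiag := by
  induction s with | _ p q
  obtain rfl | hpq := eq_or_ne p q
  · simp
  · simpa [encard_pair hpq] using hpq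

/-- The bipartite incidence graph of a family `e` of unordered pairs: the index `i` is joined to
the members of `e i`. It is the subdivision of the multigraph on `B` with edges `e i`. -/
def incidenceGraph (e : V → Sym2 B) : SimpleGraph (V ⊕ B) where
  Adj
    | .inl i, .inr j => j ∈ e i
    | .inr j, .inl i => j ∈ e i
    | _, _ => False
  symm := ⟨by rintro (_ | _) (_ | _) h <;> exact h⟩
  loopless := ⟨by rintro (_ | _) h <;> exact h⟩

section IncidenceGraph

variable {e : V → Sym2 B}

@[simp]
theorem incidenceGraph_adj_inl_inr {i : V} {j : B} :
    (incidenceGraph e).Adj (.inl i) (.inr j) ↔ j ∈ e i :=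
  Iff.rfl

@[simp]
theorem incidenceGraph_adj_inr_inl {i : V} {j : B} :
    (incidenceGraph e).Adj (.inr j) (.inl i) ↔ j ∈ e i :=
  Iff.rfl

@[simp]
theorem not_incidenceGraph_adj_inl_inl {i i' : V} :
    ¬ (incidenceGraph e).Adj (.inl i) (.inl i') :=
  id

@[simp]
theorem not_incidenceGraph_adj_inr_inr {j j' : B} :
    ¬ (incidenceGraph e).Adj (.inr j) (.inr j') :=
  id

theorem incidenceGraph_neighborSet_inl (i : V) :
    (incidenceGraph e).neighborSet (.inl i) = Sum.inr '' (e i : Set B) := by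
  ext (i' | j) <;> simp

theorem incidenceGraph_neighborSet_inr (j : B) :
    (incidenceGraph e).neighborSet (.inr j) = Sum.inl '' {i | j ∈ e i} := by
  ext (i | j') <;> simp

theorem encard_neighborSet_incidenceGraph_inl_eq_two_iff {i : V} :
    ((incidenceGraph e).neighborSet (.inl i)).encard = 2 ↔ ¬ (e i).IsDiag := by
  rw [incidenceGraph_neighborSet_inl, Sum.inr_injective.encard_image, encard_coe_sym2_eq_two_iff]

theorem edgeSet_fromEdgeSet_range (hdiag : ∀ i, ¬ (e i).IsDiag) :
    (fromEdgeSet (range e)).edgeSet = range e := by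
  rw [edgeSet_fromEdgeSet, sdiff_eq_left, Set.disjoint_left]
  rintro _ ⟨i, rfl⟩
  exact hdiag i

theorem encard_neighborSet_incidenceGraph_inr (hinj : Injective e)
    (hdiag : ∀ i, ¬ (e i).IsDiag) (j : B) :
    ((incidenceGraph e).neighborSet (.inr j)).encard =
      ((fromEdgeSet (range e)).neighborSet j).encard := by
  have incidenceSet_eq : (fromEdgeSet (range e)).incidenceSet j = e '' {i | j ∈ e i} := by
    rw [incidenceSet, edgeSet_fromEdgeSet_range hdiag]
    aesop
  rw [incidenceGraph_neighborSet_inr, Sum.inl_injective.encard_image, ← hinj.encard_image,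
    ← incidenceSet_eq]
  classical exact encard_congr (incidenceSetEquivNeighborSet _ j)

theorem incidenceGraph_forall_isCycle_length_ne_four_iff (hdiag : ∀ i, ¬ (e i).IsDiag) :
    (∀ (x : V ⊕ B) (c : (incidenceGraph e).Walk x x), c.IsCycle → c.length ≠ 4) ↔
      Injective e := by
  rw [forall_isCycle_length_ne_four_iff]
  constructor
  · intro hG i i' hii'
    induction hei : e i with | _ p q
    have hpq : p ≠ q := by simpa [hei] using hdiag i
    have adj_and_adj {x : B} (hx : x ∈ s(p, q)) : (incidenceGraph e).Adj (.inl i) (.inr x) ∧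
        (incidenceGraph e).Adj (.inl i') (.inr x) := by
      rw [incidenceGraph_adj_inl_inr, incidenceGraph_adj_inl_inr, ← hii', hei]
      exact ⟨hx, hx⟩
    obtain ⟨hip, hi'p⟩ := adj_and_adj (Sym2.mem_mk_left p q)
    obtain ⟨hiq, hi'q⟩ := adj_and_adj (Sym2.mem_mk_right p q)
    simpa [hpq] using hG hip hiq hi'p hi'q
  · intro hinj
    have eq_or_eq {i i' : V} {p q : B} (hp : p ∈ e i) (hq : q ∈ e i) (hp' : p ∈ e i')
        (hq' : q ∈ e i') : i = i' ∨ p = q := by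
      refine or_iff_not_imp_right.2 fun hpq => hinj ?_
      rw [(Sym2.mem_and_mem_iff hpq).1 ⟨hp, hq⟩, (Sym2.mem_and_mem_iff hpq).1 ⟨hp', hq'⟩]
    rintro (i | p) (i' | q) (j | p') (j' | q') <;>
      simp only [incidenceGraph_adj_inl_inr, incidenceGraph_adj_inr_inl,
        not_incidenceGraph_adj_inl_inl, not_incidenceGraph_adj_inr_inr, Sum.inl.injEq,
        Sum.inr.injEq, false_imp_iff, imp_true_iff]
    · exact eq_or_eq
    · exact fun hp hp' hq hq' => (eq_or_eq hp hq hp' hq').symm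

theorem reachable_fromEdgeSet_range_of_mem {i : V} {p q : B} (hp : p ∈ e i) (hq : q ∈ e i) :
    (fromEdgeSet (range e)).Reachable p q := by
  obtain rfl | hpq := eq_or_ne p q
  · rfl
  · refine Adj.reachable ((fromEdgeSet_adj _).2 ⟨⟨i, ?_⟩, hpq⟩)
    exact (Sym2.mem_and_mem_iff hpq).1 ⟨hp, hq⟩

theorem incidenceGraph_preconnected_iff :
    (incidenceGraph e).Preconnected ↔ (fromEdgeSet (range e)).Preconnected := by
  constructor
  · intro hG x y
    let toBlock : V ⊕ B → B := Sum.elim (fun i => (e i).out.1) id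
    refine reachable_map_of_forall_adj toBlock ?_ (hG (.inr x) (.inr y))
    rintro (i | p) (i' | q) h
    · simp at h
    · exact reachable_fromEdgeSet_range_of_mem (e i).out_fst_mem h
    · exact reachable_fromEdgeSet_range_of_mem h (e i').out_fst_mem
    · simp at h
  · intro hH
    have reachable_inr (x y : B) : (incidenceGraph e).Reachable (.inr x) (.inr y) := by
      refine reachable_map_of_forall_adj Sum.inr ?_ (hH x y)
      intro p q hpq
      obtain ⟨⟨i, hi⟩, -⟩ := (fromEdgeSet_adj _).1 hpq
      have hp : (incidenceGraph e).Adj (.inr p) (.inl i) := by simp [hi]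
      have hq : (incidenceGraph e).Adj (.inl i) (.inr q) := by simp [hi]
      exact hp.reachable.trans hq.reachable
    have exists_reachable_inr : ∀ s, ∃ x, (incidenceGraph e).Reachable s (.inr x) := by
      rintro (i | x)
      · exact ⟨_, Adj.reachable (incidenceGraph_adj_inl_inr.2 (e i).out_fst_mem)⟩
      · exact ⟨x, .rfl⟩
    intro s t
    obtain ⟨x, hsx⟩ := exists_reachable_inr s
    obtain ⟨y, hty⟩ := exists_reachable_inr t
    exact hsx.trans ((reachable_inr x y).trans hty.symm)

end IncidenceGraph

/-- An `(r, k)`-configuration on arbitrary, possibly infinite, types `V` of points and `B` of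
blocks: `IsConfiguration` without finiteness. Degrees are counted in `ℕ∞`, so that infinite
degrees do not collapse to `0`. -/
structure IsConfigurationOn (r k : ℕ∞) (G : SimpleGraph (V ⊕ B)) : Prop where
  not_adj_inl : ∀ i i' : V, ¬ G.Adj (.inl i) (.inl i')
  not_adj_inr : ∀ j j' : B, ¬ G.Adj (.inr j) (.inr j')
  preconnected : G.Preconnected
  encard_neighborSet_inl : ∀ i : V, (G.neighborSet (.inl i)).encard = r
  encard_neighborSet_inr : ∀ j : B, (G.neighborSet (.inr j)).encard = k
  length_ne_four : ∀ (x : V ⊕ B) (c : G.Walk x x), c.IsCycle → c.length ≠ 4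

theorem isConfiguration_iff_isConfigurationOn {v b r k : ℕ} {G : SimpleGraph (Fin v ⊕ Fin b)} :
    IsConfiguration v b r k G ↔ IsConfigurationOn r k G := by
  simp only [IsConfiguration, ← encard_eq_natCast_iff]
  exact ⟨fun ⟨hinl, hinr, hconn, hr, hk, hcycle⟩ => ⟨hinl, hinr, hconn, hr, hk, hcycle⟩,
    fun h => ⟨h.not_adj_inl, h.not_adj_inr, h.preconnected, h.encard_neighborSet_inl,
      h.encard_neighborSet_inr, h.length_ne_four⟩⟩

theorem IsConfigurationOn.exists_eq_incidenceGraph {k : ℕ∞} {G : SimpleGraph (V ⊕ B)}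
    (hG : IsConfigurationOn 2 k G) : ∃ e : V → Sym2 B, G = incidenceGraph e := by
  have exists_pair (i : V) : ∃ s : Sym2 B, ∀ j, G.Adj (.inl i) (.inr j) ↔ j ∈ s := by
    obtain ⟨x, y, -, hxy⟩ := encard_eq_two.1 (hG.encard_neighborSet_inl i)
    have adj_iff (z : V ⊕ B) : G.Adj (.inl i) z ↔ z = x ∨ z = y := by
      rw [← mem_neighborSet, hxy, mem_insert_iff, mem_singleton_iff]
    obtain x | p := x
    · exact absurd ((adj_iff _).2 (.inl rfl)) (hG.not_adj_inl i x)
    obtain y | q := y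
    · exact absurd ((adj_iff _).2 (.inr rfl)) (hG.not_adj_inl i y)
    exact ⟨s(p, q), fun j => by simp [adj_iff]⟩
  choose e he using exists_pair
  refine ⟨e, ?_⟩
  ext (i | j) (i' | j')
  · simp [hG.not_adj_inl]
  · simp [he]
  · simp [G.adj_comm (.inr j), he]
  · simp [hG.not_adj_inr]

theorem isConfigurationOn_two_incidenceGraph_iff {k : ℕ∞} {e : V → Sym2 B} :
    IsConfigurationOn 2 k (incidenceGraph e) ↔
      Injective e ∧ (∀ i, ¬ (e i).IsDiag) ∧ (fromEdgeSet (range e)).Preconnected ∧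
        ∀ j, ((fromEdgeSet (range e)).neighborSet j).encard = k := by
  rw [← incidenceGraph_preconnected_iff]
  constructor
  · intro hG
    have hdiag (i : V) : ¬ (e i).IsDiag :=
      encard_neighborSet_incidenceGraph_inl_eq_two_iff.1 (hG.encard_neighborSet_inl i)
    have hinj := (incidenceGraph_forall_isCycle_length_ne_four_iff hdiag).1 hG.length_ne_four
    refine ⟨hinj, hdiag, hG.preconnected, fun j => ?_⟩
    rw [← encard_neighborSet_incidenceGraph_inr hinj hdiag, hG.encard_neighborSet_inr]
  · rintro ⟨hinj, hdiag, hconn, hdeg⟩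
    exact
      { not_adj_inl := fun _ _ => not_incidenceGraph_adj_inl_inl
        not_adj_inr := fun _ _ => not_incidenceGraph_adj_inr_inr
        preconnected := hconn
        encard_neighborSet_inl := fun i =>
          encard_neighborSet_incidenceGraph_inl_eq_two_iff.2 (hdiag i)
        encard_neighborSet_inr := fun j =>
          (encard_neighborSet_incidenceGraph_inr hinj hdiag j).trans (hdeg j)
        length_ne_four := (incidenceGraph_forall_isCycle_length_ne_four_iff hdiag).2 hinj }

theorem configurable_two_iff_regular_graph_general [Nonempty B] {k : ℕ∞} :
    (∃ G : SimpleGraph (V ⊕ B), IsConfigurationOn 2 k G) ↔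
      ∃ H : SimpleGraph B, H.Connected ∧ (∀ x, (H.neighborSet x).encard = k) ∧
        Nonempty (V ≃ H.edgeSet) := by
  constructor
  · rintro ⟨G, hG⟩
    obtain ⟨e, rfl⟩ := hG.exists_eq_incidenceGraph
    obtain ⟨hinj, hdiag, hconn, hdeg⟩ := isConfigurationOn_two_incidenceGraph_iff.1 hG
    refine ⟨fromEdgeSet (range e), ⟨hconn⟩, hdeg, ⟨?_⟩⟩
    rw [edgeSet_fromEdgeSet_range hdiag]
    exact Equiv.ofInjective e hinj
  · rintro ⟨H, hconn, hdeg, ⟨φ⟩⟩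
    have range_eq : range (fun i => (φ i : Sym2 B)) = H.edgeSet := by
      simpa only [comp_def, Subtype.range_coe] using φ.surjective.range_comp Subtype.val
    refine ⟨incidenceGraph fun i => φ i, isConfigurationOn_two_incidenceGraph_iff.2 ?_⟩
    rw [range_eq, fromEdgeSet_edgeSet]
    exact ⟨Subtype.val_injective.comp φ.injective, fun i => H.not_isDiag_of_mem_edgeSet (φ i).2,
      hconn.preconnected, hdeg⟩

/-- For `k ≥ 2` and positive `v, b`, a `(v,b,2,k)`-combinatorial configuration
exists iff there exists a connected `k`-regular simple graph with `b` vertices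
and `v` edges. -/
theorem configurable_two_iff_regular_graph (k v b : ℕ) (hk : 2 ≤ k)
    (hv : 0 < v) (hb : 0 < b) :
    Configurable v b 2 k ↔
      ∃ G : SimpleGraph (Fin b), G.Connected ∧
        (∀ x : Fin b, (G.neighborSet x).ncard = k) ∧ G.edgeSet.ncard = v := by
  have : Nonempty (Fin b) := ⟨⟨0, hb⟩⟩
  simpa only [Configurable, isConfiguration_iff_isConfigurationOn, encard_eq_natCast_iff,
    ← Finite.card_eq, Nat.card_fin, Nat.card_coe_set_eq, Nat.cast_ofNat, eq_comm (a := v)]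
    using configurable_two_iff_regular_graph_general (V := Fin v) (B := Fin b) (k := k)
end

section
/- For every integer n ≥ 3 and every integer γ ≥ 3, there exists a finite n-regular simple graph whose girth is at least γ. -/
open SimpleGraph

/-!
A Cayley graph has no short cycles as soon as no short nonempty reduced word in its generators has
product `1`. Following Biggs, let each letter `i` act on the finite set of reduced words of length
at most `r` in involutive letters by adding or cancelling a leading `i`, fixing the words for which
this would exceed the length `r`. These are involutions of a finite set, and a reduced word `w` of
length at most `r` sends the empty word to `w`, so it acts trivially only if it is empty. The Cayley
graph of the permutation group with respect to these involutions is therefore a finite regular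
graph with one edge per letter at each vertex and without cycles of length at most `r`.
-/

section Acyclic

variable {V : Type*} {G : SimpleGraph V}

-- The first vertex of a longest path works: another neighbour would extend the path.
theorem exists_ncard_neighborSet_le_one_of_isAcyclic [Finite V] [Nonempty V] (hG : G.IsAcyclic) :
    ∃ x, (G.neighborSet x).ncard ≤ 1 := by
  obtain ⟨u, v, p, hp, hmax⟩ := Walk.exists_isPath_forall_isPath_length_le_length G
  refine ⟨u, (Set.ncard_le_one_iff_subset_singleton ..).mpr ⟨p.snd, fun w (huw : G.Adj u w) ↦ ?_⟩⟩
  have mem_support : w ∈ p.support := by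
    by_contra hw
    have := hmax _ _ _ (hp.cons (h := huw.symm) hw)
    rw [Walk.length_cons] at this
    omega
  exact hG.eq_snd_of_adj_start hp huw mem_support

theorem natCast_girth_eq_egirth_of_two_le_ncard_neighborSet [Finite V] [Nonempty V]
    (hG : ∀ x, 2 ≤ (G.neighborSet x).ncard) : (G.girth : ℕ∞) = G.egirth := by
  refine ENat.natCast_toNat (egirth_eq_top.not.mpr fun hac ↦ ?_)
  obtain ⟨x, hx⟩ := exists_ncard_neighborSet_le_one_of_isAcyclic hac
  exact absurd (hG x) (by omega)

end Acyclic

section Cayley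

variable {M : Type*} [Group M] {G : SimpleGraph M} {s : Set M} {x y : M}

/-- The word spelled by a walk in a graph on a group: the list of the elements by which one
multiplies on the right to go from each vertex of the walk to the next. -/
def walkWord (p : G.Walk x y) : List M :=
  p.darts.map fun d ↦ d.fst⁻¹ * d.snd

@[simp]
theorem walkWord_cons {z : M} (h : G.Adj x y) (p : G.Walk y z) :
    walkWord (p.cons h) = x⁻¹ * y :: walkWord p :=
  rfl

@[simp]
theorem length_walkWord (p : G.Walk x y) : (walkWord p).length = p.length := by
  simp [walkWord]

theorem prod_walkWord (p : G.Walk x y) : (walkWord p).prod = x⁻¹ * y := by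
  induction p with
  | nil => simp [walkWord]
  | cons h p ih => simp [ih, mul_assoc]

-- Two consecutive steps that cancel traverse the same edge back and forth.
theorem isChain_walkWord_of_isTrail {p : G.Walk x y} (hp : p.IsTrail) :
    (walkWord p).IsChain (· * · ≠ 1) := by
  induction p with
  | nil => exact .nil
  | cons h p ih =>
    obtain ⟨hp, hnotMem⟩ := Walk.isTrail_cons _ _ |>.mp hp
    refine (ih hp).cons fun a ha hcancel ↦ hnotMem ?_
    cases p with
    | nil => simp [walkWord] at ha
    | @cons _ z _ h' q =>
      obtain rfl : _ = a := by simpa using ha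
      obtain rfl : _ = z := by simpa [mul_assoc, inv_mul_eq_one] using hcancel
      simp [Sym2.eq_swap]

theorem mulCayley_adj_iff_of_inv_eq_self (hs : s⁻¹ = s) :
    (mulCayley s).Adj x y ↔ x ≠ y ∧ x⁻¹ * y ∈ s := by
  have hinv : y⁻¹ * x ∈ s ↔ x⁻¹ * y ∈ s := by
    rw [← Set.inv_mem_inv, hs, mul_inv_rev, inv_inv]
  rw [mulCayley_adj, hinv, or_self]

theorem neighborSet_mulCayley (hs : s⁻¹ = s) (hone : 1 ∉ s) :
    (mulCayley s).neighborSet x = (x * ·) '' s := by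
  ext y
  rw [mem_neighborSet, mulCayley_adj_iff_of_inv_eq_self hs, Set.image_mul_left, Set.mem_preimage,
    and_iff_right_iff_imp]
  rintro hy rfl
  exact hone (by simpa using hy)

theorem ncard_neighborSet_mulCayley (hs : s⁻¹ = s) (hone : 1 ∉ s) :
    ((mulCayley s).neighborSet x).ncard = s.ncard := by
  rw [neighborSet_mulCayley hs hone, Set.ncard_image_of_injective _ (mul_right_injective x)]

theorem mem_of_mem_walkWord (hs : s⁻¹ = s) (p : (mulCayley s).Walk x y) :
    ∀ a ∈ walkWord p, a ∈ s := by
  simp only [walkWord, List.forall_mem_map]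
  exact fun d _ ↦ ((mulCayley_adj_iff_of_inv_eq_self hs).mp d.adj).2

theorem le_egirth_mulCayley (hs : s⁻¹ = s) {r : ℕ∞}
    (hr : ∀ w : List M, w ≠ [] → (∀ a ∈ w, a ∈ s) → w.IsChain (· * · ≠ 1) → w.prod = 1 →
      r ≤ w.length) :
    r ≤ (mulCayley s).egirth := by
  refine le_egirth.mpr fun x p hp ↦ ?_
  rw [← length_walkWord]
  refine hr _ ?_ (mem_of_mem_walkWord hs p) (isChain_walkWord_of_isTrail hp.isTrail) ?_
  · rw [← List.length_pos_iff, length_walkWord]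
    exact Nat.zero_lt_of_lt hp.three_le_length
  · rw [prod_walkWord, inv_mul_cancel]

end Cayley

/-- Reduced words of length at most `r` in letters `ι`, each letter being its own inverse. -/
abbrev ReducedWord (ι : Type*) (r : ℕ) : Type _ :=
  {w : List ι // w.IsChain (· ≠ ·) ∧ w.length ≤ r}

namespace ReducedWord

variable {ι : Type*} {r : ℕ}

instance [Finite ι] : Finite (ReducedWord ι r) :=
  ((List.finite_length_le ι r).subset fun _ hw ↦ hw.2).to_subtype

/-- The empty word. -/
def empty : ReducedWord ι r :=
  ⟨[], .nil, r.zero_le⟩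

variable [DecidableEq ι]

/-- Multiplication on the left by the letter `i`: cancel a leading `i`, or else prepend `i` if the
length bound `r` allows it, or else do nothing. -/
def toggle (i : ι) (w : ReducedWord ι r) : ReducedWord ι r :=
  if hi : w.1.head? = some i then
    ⟨w.1.tail, w.2.1.tail, by grind⟩
  else if hr : w.1.length < r then
    ⟨i :: w.1, w.2.1.cons fun _ hj hij ↦ hi (hij ▸ hj), hr⟩
  else w

-- After cancelling `i`, reducedness of the word ensures that the rest does not start with `i`, so
-- the second application prepends `i` again.
theorem toggle_involutive (i : ι) : Function.Involutive (toggle i : ReducedWord ι r → _) := by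
  rintro ⟨w, hw, hwr⟩
  cases w with grind [toggle, List.isChain_cons]

theorem toggle_of_cons {i : ι} {w : List ι} (h : (i :: w).IsChain (· ≠ ·) ∧ (i :: w).length ≤ r) :
    toggle i ⟨w, h.1.tail, by grind⟩ = ⟨i :: w, h⟩ := by
  grind [toggle, List.isChain_cons]

/-- The involution of the reduced words of length at most `r` given by the letter `i`. -/
def letterPerm (r : ℕ) (i : ι) : Equiv.Perm (ReducedWord ι r) :=
  (toggle_involutive i).toPerm

theorem letterPerm_mul_self (i : ι) : letterPerm r i * letterPerm r i = 1 :=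
  Equiv.ext (toggle_involutive i)

theorem letterPerm_inv (i : ι) : (letterPerm r i)⁻¹ = letterPerm r i :=
  inv_eq_of_mul_eq_one_right (letterPerm_mul_self i)

theorem letterPerm_empty (hr : 0 < r) (i : ι) :
    letterPerm r i empty = ⟨[i], List.isChain_singleton i, hr⟩ :=
  toggle_of_cons ⟨List.isChain_singleton i, hr⟩

theorem prod_map_letterPerm_empty (w : ReducedWord ι r) :
    (w.1.map (letterPerm r)).prod empty = w := by
  obtain ⟨w, hw⟩ := w
  induction w with
  | nil => rfl
  | cons i w ih =>
    rw [List.map_cons, List.prod_cons, Equiv.Perm.mul_apply, ih ⟨hw.1.tail, by grind⟩]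
    exact toggle_of_cons hw

theorem letterPerm_injective (hr : 0 < r) : Function.Injective (letterPerm r : ι → _) := by
  intro i j hij
  have := letterPerm_empty hr i
  rw [hij, letterPerm_empty hr] at this
  simpa using this.symm

theorem one_notMem_range_letterPerm (hr : 0 < r) : 1 ∉ Set.range (letterPerm r : ι → _) := by
  rintro ⟨i, hi⟩
  have := letterPerm_empty hr i
  simp [hi, empty] at this

theorem inv_range_letterPerm :
    (Set.range (letterPerm r : ι → _))⁻¹ = Set.range (letterPerm r) := by
  simp only [Set.inv_range, letterPerm_inv]

theorem lt_length_of_prod_map_letterPerm_eq_one {w : List ι} (hne : w ≠ [])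
    (hw : w.IsChain (· ≠ ·)) (hprod : (w.map (letterPerm r)).prod = 1) : r < w.length := by
  by_contra! hwr
  have := prod_map_letterPerm_empty ⟨w, hw, hwr⟩
  rw [hprod, Equiv.Perm.one_apply] at this
  exact hne (congrArg Subtype.val this).symm

theorem lt_egirth_mulCayley_range_letterPerm :
    (r : ℕ∞) < (mulCayley (Set.range (letterPerm r : ι → _))).egirth := by
  refine ENat.add_one_le_iff (ENat.natCast_ne_top r) |>.mp ?_
  refine le_egirth_mulCayley inv_range_letterPerm fun l hne hl hchain hprod ↦ ?_
  obtain ⟨w, rfl⟩ : l ∈ Set.range (List.map (letterPerm r)) := by rwa [Set.range_list_map]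
  have reduced : w.IsChain (· ≠ ·) :=
    ((List.isChain_map _).mp hchain).imp fun i j hij ↦ by
      rintro rfl
      exact hij (letterPerm_mul_self i)
  rw [List.length_map]
  exact_mod_cast lt_length_of_prod_map_letterPerm_eq_one (by simpa using hne) reduced hprod

end ReducedWord

open ReducedWord in
theorem exists_regular_graph_of_large_girth_general (n γ : ℕ) :
    ∃ (V : Type) (_ : Finite V) (_ : Nonempty V) (G : SimpleGraph V),
      (∀ x : V, (G.neighborSet x).ncard = n) ∧ (γ : ℕ∞) ≤ G.egirth := by
  -- The successor makes the words of length `1` available, which tell the letters apart.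
  let r := γ + 1
  have hr : 0 < r := γ.succ_pos
  refine ⟨Equiv.Perm (ReducedWord (Fin n) r), inferInstance, inferInstance,
    mulCayley (Set.range (letterPerm r)), fun x ↦ ?_, ?_⟩
  · rw [ncard_neighborSet_mulCayley inv_range_letterPerm (one_notMem_range_letterPerm hr),
      Set.ncard_range_of_injective (letterPerm_injective hr), Nat.card_fin]
  · exact (Nat.cast_le.mpr γ.le_succ).trans lt_egirth_mulCayley_range_letterPerm.le

/-- For every `n ≥ 3` and every `γ ≥ 3` there exists a finite `n`-regular
simple graph whose girth is at least `γ`. -/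
theorem exists_regular_graph_of_large_girth (n γ : ℕ) (hn : 3 ≤ n) (hγ : 3 ≤ γ) :
    ∃ (V : Type) (_ : Fintype V) (_ : Nonempty V) (G : SimpleGraph V),
      (∀ x : V, (G.neighborSet x).ncard = n) ∧ (γ : ℕ∞) ≤ G.girth := by
  obtain ⟨V, _, _, G, hreg, hgirth⟩ := exists_regular_graph_of_large_girth_general n γ
  exact ⟨V, Fintype.ofFinite V, ‹_›, G, hreg, by
    rwa [natCast_girth_eq_egirth_of_two_le_ncard_neighborSet fun x ↦ by rw [hreg]; omega]⟩
end

section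
/- In any (v,b,r,k)-combinatorial configuration with r ≥ 2 and k ≥ 2 (and nonempty), there exist three edges whose six endpoints are pairwise distinct, i.e., the graph contains a matching of size 3. -/
open SimpleGraph

/-!
A path of length `n` can be prolonged as long as `n + 1` is below the girth: its first vertex has a
neighbor other than the second vertex, and if that neighbor were on the path, it would close a cycle
of length at most `n + 1`. Since a bipartite graph without 4-cycles has girth at least 6, a
configuration contains a path of length 5, whose first, third and fifth edges form the matching.
-/

section Girth

variable {V : Type*} {G : SimpleGraph V}

theorem egirth_le_length_add_one_of_adj_of_ne_snd {u v x : V} {p : G.Walk u v} (hp : p.IsPath)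
    (hux : G.Adj u x) (hne : x ≠ p.snd) (hx : x ∈ p.support) : G.egirth ≤ p.length + 1 := by
  classical
  have hcycle : (Walk.cons hux.symm (p.takeUntil x hx)).IsCycle := by
    refine (Walk.cons_isCycle_iff _ _).2 ⟨hp.takeUntil hx, fun hmem ↦ hne ?_⟩
    exact hp.eq_snd_of_mem_edges (p.edges_takeUntil_subset_edges hx (Sym2.eq_swap ▸ hmem))
  calc G.egirth ≤ (p.takeUntil x hx).length + 1 := mod_cast egirth_le_length hcycle
    _ ≤ p.length + 1 := mod_cast Nat.succ_le_succ (p.length_takeUntil_le_length hx)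

theorem exists_isPath_length_eq_of_lt_egirth [Nonempty V]
    (hG : ∀ x, (G.neighborSet x).Nontrivial) {n : ℕ} (hn : n < G.egirth) :
    ∃ (u v : V) (p : G.Walk u v), p.IsPath ∧ p.length = n := by
  induction n with
  | zero => exact ⟨Classical.arbitrary V, _, .nil, .nil, rfl⟩
  | succ n ih =>
    obtain ⟨u, v, p, hp, rfl⟩ := ih (lt_of_le_of_lt (mod_cast n.le_succ) hn)
    obtain ⟨x, hux, hne⟩ := (hG u).exists_ne p.snd
    have hx : x ∉ p.support := fun hx ↦
      hn.not_ge (mod_cast egirth_le_length_add_one_of_adj_of_ne_snd hp hux hne hx)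
    exact ⟨x, v, .cons hux.symm p, hp.cons hx, p.length_cons _⟩

theorem six_le_egirth_of_isBipartite (hG : G.IsBipartite)
    (h4 : ∀ (x : V) (c : G.Walk x x), c.IsCycle → c.length ≠ 4) : 6 ≤ G.egirth := by
  refine le_egirth.2 fun x c hc ↦ ?_
  have heven : Even c.length := two_colorable_iff_forall_loop_even.1 hG x c
  have hthree : 3 ≤ c.length := hc.three_le_length
  have hfour : c.length ≠ 4 := h4 x c hc
  have hsix : 6 ≤ c.length := by grind
  exact_mod_cast hsix

theorem configuration_exists_matching_three_general [Nonempty V]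
    (hG : ∀ x, (G.neighborSet x).Nontrivial) (hgirth : 6 ≤ G.egirth) :
    ∃ u₁ w₁ u₂ w₂ u₃ w₃ : V,
      G.Adj u₁ w₁ ∧ G.Adj u₂ w₂ ∧ G.Adj u₃ w₃ ∧
      [u₁, w₁, u₂, w₂, u₃, w₃].Pairwise (· ≠ ·) := by
  obtain ⟨_, _, p, hp, hlen⟩ :=
    exists_isPath_length_eq_of_lt_egirth (n := 5) hG (lt_of_lt_of_le (by norm_num) hgirth)
  match p, hlen with
  | .cons h₁ (.cons _ (.cons h₂ (.cons _ (.cons h₃ .nil)))), _ =>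
    exact ⟨_, _, _, _, _, _, h₁, h₂, h₃, hp.support_nodup⟩

end Girth

namespace IsConfiguration

variable {v b r k : ℕ} {G : SimpleGraph (Fin v ⊕ Fin b)}

theorem isBipartite (hG : IsConfiguration v b r k G) : G.IsBipartite := by
  obtain ⟨hleft, hright, -⟩ := hG
  refine (Coloring.mk Sum.isLeft ?_ : G.Coloring Bool).colorable
  rintro (i | i) (j | j) hadj
  · exact absurd hadj (hleft i j)
  · simp
  · simp
  · exact absurd hadj (hright i j)

theorem six_le_egirth (hG : IsConfiguration v b r k G) : 6 ≤ G.egirth :=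
  six_le_egirth_of_isBipartite hG.isBipartite hG.2.2.2.2.2

theorem nontrivial_neighborSet (hG : IsConfiguration v b r k G) (hr : 2 ≤ r) (hk : 2 ≤ k)
    (x : Fin v ⊕ Fin b) : (G.neighborSet x).Nontrivial := by
  obtain ⟨-, -, -, hleft, hright, -⟩ := hG
  refine (Set.one_lt_ncard_iff_nontrivial_and_finite.1 ?_).1
  rcases x with i | j
  · exact (hleft i).symm ▸ hr
  · exact (hright j).symm ▸ hk

end IsConfiguration

/-- Any nonempty `(v,b,r,k)`-combinatorial configuration with `r, k ≥ 2`
contains three edges whose six endpoints are pairwise distinct. -/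
theorem configuration_exists_matching_three (v b r k : ℕ) (hr : 2 ≤ r) (hk : 2 ≤ k)
    (hv : 0 < v) (G : SimpleGraph (Fin v ⊕ Fin b)) (hG : IsConfiguration v b r k G) :
    ∃ u₁ w₁ u₂ w₂ u₃ w₃ : Fin v ⊕ Fin b,
      G.Adj u₁ w₁ ∧ G.Adj u₂ w₂ ∧ G.Adj u₃ w₃ ∧
      [u₁, w₁, u₂, w₂, u₃, w₃].Pairwise (· ≠ ·) := by
  have : Nonempty (Fin v ⊕ Fin b) := ⟨.inl ⟨0, hv⟩⟩
  exact configuration_exists_matching_three_general (hG.nontrivial_neighborSet hr hk)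
    hG.six_le_egirth
end

section
/- For all integers r ≥ 2 and k ≥ 2 there exists a natural number N such that for all positive integers v, b with v·r = b·k and v ≥ N, the tuple (v,b,r,k) is configurable, i.e., a (v,b,r,k)-combinatorial configuration exists. -/
open SimpleGraph

/-!
Write `r = r' g` and `k = k' g` with `g = gcd r k`, so that `v = d k'` and `b = d r'` for some `d`.
The complete bipartite multigraph on `k' + r'` vertices with all edges of multiplicity `g` has
degrees `r` and `k`. Attach to every edge a voltage in `ZMod d` and pass to the derived `d`-fold
cover: it has the prescribed numbers of vertices and the same degrees. A cycle of length `4` in the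
cover gives a relation between two sums of two voltages, so a Sidon assignment excludes them, and
the cover is connected once some closed walk of the base has net voltage `1`.

Since `r, k ≥ 2`, the multigraph contains either a double edge or a square. On it we use the
voltages `0, 1` or `0, 1, 4, 6`: these form a Sidon set, and `1 - 0 = 1` and `6 - 4 + 0 - 1 = 1`.
A Sidon assignment of natural numbers extends greedily to all edges, and stays Sidon modulo any `d`
that exceeds twice its maximum.
-/

section Sidon

variable {ι κ M : Type*}

/-- A family `s` is Sidon on `S` if the sums of two of its members with indices in `S` are distinct,
up to exchanging the summands. The summands are compared as indices, so `s` is injective on `S`. -/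
def IsSidonOn [Add M] (s : ι → M) (S : Set ι) : Prop :=
  ∀ ⦃p⦄, p ∈ S → ∀ ⦃q⦄, q ∈ S → ∀ ⦃t⦄, t ∈ S → ∀ ⦃u⦄, u ∈ S →
    s p + s q = s t + s u → p = t ∧ q = u ∨ p = u ∧ q = t

theorem IsSidonOn.injOn [Add M] {s : ι → M} {S : Set ι} (hs : IsSidonOn s S) : S.InjOn s := by
  intro p hp q hq h
  rcases hs hp hp hq hq (by rw [h]) with ⟨h, -⟩ | ⟨h, -⟩ <;> exact h

theorem IsSidonOn.extend_range [Add M] {s : ι → M} (hs : IsSidonOn s Set.univ) {c : ι → κ}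
    (hc : c.Injective) (g : κ → M) : IsSidonOn (c.extend s g) (Set.range c) := by
  rintro _ ⟨p, rfl⟩ _ ⟨q, rfl⟩ _ ⟨t, rfl⟩ _ ⟨u, rfl⟩ h
  simp only [hc.extend_apply] at h
  simpa only [hc.eq_iff] using hs trivial trivial trivial trivial h

theorem IsSidonOn.exists_insert {s : ι → ℕ} {S : Set ι} (hs : IsSidonOn s S) (hS : S.Finite)
    (e : ι) : ∃ s' : ι → ℕ, IsSidonOn s' (insert e S) ∧ S.EqOn s' s := by
  classical
  by_cases he : e ∈ S
  · exact ⟨s, by rwa [Set.insert_eq_of_mem he], fun _ _ ↦ rfl⟩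
  obtain ⟨m, hm⟩ := (hS.image s).bddAbove
  replace hm : ∀ p ∈ S, s p ≤ m := fun p hp ↦ hm ⟨p, hp, rfl⟩
  have hne : ∀ p ∈ S, p ≠ e := fun p hp h ↦ he (h ▸ hp)
  -- The new value exceeds every sum of two old ones.
  set s' := Function.update s e (2 * m + 1)
  have hnew : s' e = 2 * m + 1 := Function.update_self ..
  have hold : ∀ p ∈ S, s' p = s p := fun p hp ↦ Function.update_of_ne (hne p hp) _ _
  refine ⟨s', ?_, hold⟩
  rintro p (rfl | hp) q (rfl | hq) t (rfl | ht) u (rfl | hu) h <;>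
    grind [IsSidonOn, IsSidonOn.injOn, Set.InjOn]

theorem IsSidonOn.exists_union {s : ι → ℕ} {S T : Set ι} (hs : IsSidonOn s S) (hS : S.Finite)
    (hT : T.Finite) : ∃ s' : ι → ℕ, IsSidonOn s' (T ∪ S) ∧ S.EqOn s' s := by
  induction T, hT using Set.Finite.induction_on with
  | empty => exact ⟨s, by rwa [Set.empty_union], fun _ _ ↦ rfl⟩
  | @insert e T _ hT ih =>
    obtain ⟨s₁, hs₁, h₁⟩ := ih
    obtain ⟨s₂, hs₂, h₂⟩ := hs₁.exists_insert (hT.union hS) e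
    refine ⟨s₂, by rwa [Set.insert_union], (h₂.mono Set.subset_union_right).trans h₁⟩

theorem IsSidonOn.exists_extension [Finite ι] [Finite κ] {s : ι → ℕ} (hs : IsSidonOn s Set.univ)
    {c : ι → κ} (hc : c.Injective) :
    ∃ s' : κ → ℕ, IsSidonOn s' Set.univ ∧ ∀ i, s' (c i) = s i := by
  obtain ⟨s', hs', h⟩ :=
    (hs.extend_range hc 0).exists_union (Set.finite_range c) (Set.finite_univ (α := κ))
  refine ⟨s', by rwa [Set.univ_union] at hs', fun i ↦ ?_⟩
  rw [h ⟨i, rfl⟩, hc.extend_apply]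

theorem IsSidonOn.natCast_zmod {s : ι → ℕ} {S : Set ι} (hs : IsSidonOn s S) {m d : ℕ}
    (hm : ∀ p ∈ S, s p ≤ m) (hd : 2 * m < d) : IsSidonOn (fun p ↦ (s p : ZMod d)) S := by
  intro p hp q hq t ht u hu h
  have hlt : ∀ x ∈ S, ∀ y ∈ S, s x + s y < d := fun x hx y hy ↦ by
    have := hm x hx
    have := hm y hy
    omega
  have h' : ((s p + s q : ℕ) : ZMod d) = (s t + s u : ℕ) := by simpa using h
  rw [ZMod.natCast_eq_natCast_iff', Nat.mod_eq_of_lt (hlt p hp q hq),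
    Nat.mod_eq_of_lt (hlt t ht u hu)] at h'
  exact hs hp hq ht hu h'

end Sidon

section LeviGraph

variable {α β : Type*}

/-- The Levi graph (incidence graph) of a relation `I` between points and blocks. -/
def leviGraph (I : α → β → Prop) : SimpleGraph (α ⊕ β) where
  Adj
    | .inl x, .inr y => I x y
    | .inr y, .inl x => I x y
    | _, _ => False
  symm := ⟨by rintro (_ | _) (_ | _) h <;> exact h⟩
  loopless := ⟨by rintro (_ | _) h <;> exact h⟩

variable {I : α → β → Prop}

@[simp]
theorem leviGraph_adj_inl_inr {x : α} {y : β} : (leviGraph I).Adj (.inl x) (.inr y) ↔ I x y :=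
  Iff.rfl

@[simp]
theorem leviGraph_adj_inr_inl {x : α} {y : β} : (leviGraph I).Adj (.inr y) (.inl x) ↔ I x y :=
  Iff.rfl

@[simp]
theorem not_leviGraph_adj_inl_inl (x x' : α) : ¬ (leviGraph I).Adj (.inl x) (.inl x') :=
  id

@[simp]
theorem not_leviGraph_adj_inr_inr (y y' : β) : ¬ (leviGraph I).Adj (.inr y) (.inr y') :=
  id

theorem leviGraph_neighborSet_inl (x : α) :
    (leviGraph I).neighborSet (.inl x) = Sum.inr '' {y | I x y} := by
  ext (_ | _) <;> simp

theorem leviGraph_neighborSet_inr (y : β) :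
    (leviGraph I).neighborSet (.inr y) = Sum.inl '' {x | I x y} := by
  ext (_ | _) <;> simp

/-- Relabelling points and blocks does not change the Levi graph. -/
def leviGraphIso {α' β' : Type*} (I : α → β → Prop) (e : α' ≃ α) (f : β' ≃ β) :
    leviGraph (fun x y ↦ I (e x) (f y)) ≃g leviGraph I where
  toEquiv := e.sumCongr f
  map_rel_iff' := by rintro (_ | _) (_ | _) <;> simp

theorem exists_adj_of_isCycle_of_length_eq_four {V : Type*} {G : SimpleGraph V} {x : V}
    {c : G.Walk x x} (hc : c.IsCycle) (h : c.length = 4) :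
    ∃ x₁ x₂ x₃, G.Adj x x₁ ∧ G.Adj x₁ x₂ ∧ G.Adj x₂ x₃ ∧ G.Adj x₃ x ∧ x ≠ x₂ ∧ x₁ ≠ x₃ := by
  have hnodup := hc.support_nodup
  match c, h, hnodup with
  | .cons h₁ (.cons h₂ (.cons h₃ (.cons h₄ .nil))), _, hnodup =>
    simp only [Walk.support_cons, Walk.support_nil, List.tail_cons, List.nodup_cons,
      List.mem_cons, List.not_mem_nil, or_false, not_or] at hnodup
    exact ⟨_, _, _, h₁, h₂, h₃, h₄, Ne.symm hnodup.2.1.2, hnodup.1.2.1⟩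

/-- A relation between points and blocks is linear if two distinct points are incident with at most
one common block. Equivalently, its Levi graph has no cycle of length `4`. -/
def IsLinear (I : α → β → Prop) : Prop :=
  ∀ ⦃x x' y y'⦄, I x y → I x y' → I x' y → I x' y' → x = x' ∨ y = y'

theorem IsLinear.length_ne_four_of_isCycle (hI : IsLinear I) {w : α ⊕ β}
    {c : (leviGraph I).Walk w w} (hc : c.IsCycle) : c.length ≠ 4 := by
  intro h
  obtain ⟨w₁, w₂, w₃, h₁, h₂, h₃, h₄, hne, hne'⟩ := exists_adj_of_isCycle_of_length_eq_four hc h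
  rcases w with x | y <;> rcases w₁ with x₁ | y₁ <;> rcases w₂ with x₂ | y₂ <;>
    rcases w₃ with x₃ | y₃ <;>
    simp only [leviGraph_adj_inl_inr, leviGraph_adj_inr_inl, not_leviGraph_adj_inl_inl,
      not_leviGraph_adj_inr_inr] at h₁ h₂ h₃ h₄
  · rcases hI h₁ h₄ h₂ h₃ with rfl | rfl <;> contradiction
  · rcases hI h₁ h₂ h₄ h₃ with rfl | rfl <;> contradiction

theorem configurable_of_isLinear {v b r k : ℕ} (e : Fin v ≃ α) (f : Fin b ≃ β) (hI : IsLinear I)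
    (hconn : (leviGraph I).Preconnected) (hr : ∀ x, {y | I x y}.ncard = r)
    (hk : ∀ y, {x | I x y}.ncard = k) : Configurable v b r k := by
  refine ⟨leviGraph fun i j ↦ I (e i) (f j), not_leviGraph_adj_inl_inl, not_leviGraph_adj_inr_inr,
    (leviGraphIso I e f).preconnected_iff.2 hconn, fun i ↦ ?_, fun j ↦ ?_, fun _ _ hc ↦ ?_⟩
  · rw [leviGraph_neighborSet_inl, Set.ncard_image_of_injective _ Sum.inr_injective, ← hr (e i)]
    exact Set.ncard_preimage_of_injective_subset_range (s := {y | I (e i) y}) f.injective (by simp)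
  · rw [leviGraph_neighborSet_inr, Set.ncard_image_of_injective _ Sum.inl_injective, ← hk (f j)]
    exact Set.ncard_preimage_of_injective_subset_range (s := {x | I x (f j)}) e.injective (by simp)
  · refine IsLinear.length_ne_four_of_isCycle (fun x x' y y' h₁ h₂ h₃ h₄ ↦ ?_) hc
    simpa using hI h₁ h₂ h₃ h₄

end LeviGraph

section VoltageCover

variable {Γ A B C : Type*} [AddCommGroup Γ]

/-- The incidence relation of the derived cover of a bipartite multigraph with parts `A` and `B`,
whose edges between `a` and `b` are the triples `(a, b, c)`, with voltage `s (a, b, c)` in `Γ`.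
The lift of the edge `(a, b, c)` starting at `(x, a)` ends at `(x + s (a, b, c), b)`. -/
def coverIncidence (s : A × B × C → Γ) (p : Γ × A) (l : Γ × B) : Prop :=
  ∃ c, l.1 = p.1 + s (p.2, l.2, c)

variable {s : A × B × C → Γ}

theorem ncard_coverIncidence_right (hs : s.Injective) (p : Γ × A) :
    {l | coverIncidence s p l}.ncard = Nat.card B * Nat.card C := by
  have hrange : {l | coverIncidence s p l} =
      Set.range fun w : B × C ↦ (p.1 + s (p.2, w.1, w.2), w.1) := by
    ext ⟨y, b⟩
    simp only [coverIncidence, Set.mem_ofPred_eq, Set.mem_range, Prod.mk.injEq, Prod.exists]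
    grind
  have hinj : Function.Injective fun w : B × C ↦ (p.1 + s (p.2, w.1, w.2), w.1) := by
    intro w w' h
    have := hs (add_left_cancel (Prod.ext_iff.1 h).1)
    grind
  rw [hrange, Set.ncard_range_of_injective hinj, Nat.card_prod]

theorem ncard_coverIncidence_left (hs : s.Injective) (l : Γ × B) :
    {p | coverIncidence s p l}.ncard = Nat.card A * Nat.card C := by
  have hrange : {p | coverIncidence s p l} =
      Set.range fun w : A × C ↦ (l.1 - s (w.1, l.2, w.2), w.1) := by
    ext ⟨x, a⟩
    simp only [coverIncidence, Set.mem_ofPred_eq, Set.mem_range, Prod.mk.injEq, Prod.exists,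
      sub_eq_iff_eq_add]
    grind
  have hinj : Function.Injective fun w : A × C ↦ (l.1 - s (w.1, l.2, w.2), w.1) := by
    intro w w' h
    have := hs (sub_right_injective (Prod.ext_iff.1 h).1)
    grind
  rw [hrange, Set.ncard_range_of_injective hinj, Nat.card_prod]

theorem IsSidonOn.isLinear_coverIncidence (hs : IsSidonOn s Set.univ) :
    IsLinear (coverIncidence s) := by
  rintro ⟨x, a⟩ ⟨x', a'⟩ ⟨y, b⟩ ⟨y', b'⟩ ⟨c₁, h₁⟩ ⟨c₂, h₂⟩ ⟨c₃, h₃⟩ ⟨c₄, h₄⟩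
  dsimp only at h₁ h₂ h₃ h₄
  have hsum : s (a, b, c₁) + s (a', b', c₄) = s (a', b, c₃) + s (a, b', c₂) := by
    apply add_left_cancel (a := x + x')
    calc x + x' + (s (a, b, c₁) + s (a', b', c₄))
        = (x + s (a, b, c₁)) + (x' + s (a', b', c₄)) := by abel
      _ = (x' + s (a', b, c₃)) + (x + s (a, b', c₂)) := by rw [← h₁, ← h₂, ← h₃, ← h₄]
      _ = x + x' + (s (a', b, c₃) + s (a, b', c₂)) := by abel
  rcases hs trivial trivial trivial trivial hsum with ⟨h, -⟩ | ⟨h, -⟩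
  · left
    obtain ⟨rfl, -, rfl⟩ : a = a' ∧ b = b ∧ c₁ = c₃ := by simpa using h
    rw [add_right_cancel (h₁.symm.trans h₃)]
  · right
    obtain ⟨-, rfl, rfl⟩ : a = a ∧ b = b' ∧ c₁ = c₂ := by simpa using h
    rw [h₁, h₂]

theorem reachable_coverIncidence (s : A × B × C → Γ) (x : Γ) (a a' : A) (b : B) (c c' : C) :
    (leviGraph (coverIncidence s)).Reachable (.inl (x, a))
      (.inl (x + (s (a, b, c) - s (a', b, c')), a')) := by
  have hfst : (leviGraph (coverIncidence s)).Adj (.inl (x, a)) (.inr (x + s (a, b, c), b)) :=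
    ⟨c, rfl⟩
  have hsnd : (leviGraph (coverIncidence s)).Adj (.inr (x + s (a, b, c), b))
      (.inl (x + (s (a, b, c) - s (a', b, c')), a')) := ⟨c', by simp [add_assoc]⟩
  exact hfst.reachable.trans hsnd.reachable

/-- The holonomy group of a voltage assignment at `a`: the translations of the fibre over `a` that
are realized by walks in the derived cover, i.e. the net voltages of closed walks at `a`. -/
def holonomy (s : A × B × C → Γ) (a : A) : AddSubgroup Γ where
  carrier := {y | ∀ x, (leviGraph (coverIncidence s)).Reachable (.inl (x, a)) (.inl (x + y, a))}
  zero_mem' x := by rw [add_zero]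
  add_mem' {y z} hy hz x := by simpa [add_assoc] using (hy x).trans (hz (x + y))
  neg_mem' {y} hy x := by simpa using (hy (x + -y)).symm

theorem sub_mem_holonomy (s : A × B × C → Γ) (a : A) (b : B) (c c' : C) :
    s (a, b, c) - s (a, b, c') ∈ holonomy s a :=
  fun x ↦ reachable_coverIncidence s x a a b c c'

theorem square_mem_holonomy (s : A × B × C → Γ) (a a' : A) (b b' : B) (c : C) :
    s (a, b, c) - s (a', b, c) + (s (a', b', c) - s (a, b', c)) ∈ holonomy s a := fun x ↦ by
  rw [← add_assoc]
  exact (reachable_coverIncidence s x a a' b c c).trans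
    (reachable_coverIncidence s _ a' a b' c c)

theorem preconnected_of_holonomy_eq_top [Nonempty B] [Nonempty C] {a : A}
    (h : holonomy s a = ⊤) : (leviGraph (coverIncidence s)).Preconnected := by
  obtain ⟨b₀⟩ := ‹Nonempty B›
  obtain ⟨c₀⟩ := ‹Nonempty C›
  have hfibre (x x' : Γ) :
      (leviGraph (coverIncidence s)).Reachable (.inl (x, a)) (.inl (x', a)) := by
    have hmem : x' - x ∈ holonomy s a := h ▸ AddSubgroup.mem_top _
    simpa using hmem x
  have hbase (w) : ∃ x, (leviGraph (coverIncidence s)).Reachable w (.inl (x, a)) := by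
    rcases w with ⟨x, a'⟩ | ⟨y, b⟩
    · exact ⟨_, reachable_coverIncidence s x a' a b₀ c₀ c₀⟩
    · have hadj : (leviGraph (coverIncidence s)).Adj (.inr (y, b)) (.inl (y - s (a, b, c₀), a)) :=
        ⟨c₀, by simp⟩
      exact ⟨_, hadj.reachable⟩
  intro w w'
  obtain ⟨x, hx⟩ := hbase w
  obtain ⟨x', hx'⟩ := hbase w'
  exact hx.trans ((hfibre x x').trans hx'.symm)

theorem configurable_of_isSidonOn [Finite Γ] [Finite A] [Finite B] [Nonempty B] [Nonempty C]
    (hs : IsSidonOn s Set.univ) {a : A} (h : holonomy s a = ⊤) :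
    Configurable (Nat.card Γ * Nat.card A) (Nat.card Γ * Nat.card B)
      (Nat.card B * Nat.card C) (Nat.card A * Nat.card C) :=
  have hinj : s.Injective := Set.injOn_univ.1 hs.injOn
  configurable_of_isLinear (Finite.equivFinOfCardEq (Nat.card_prod Γ A)).symm
    (Finite.equivFinOfCardEq (Nat.card_prod Γ B)).symm hs.isLinear_coverIncidence
    (preconnected_of_holonomy_eq_top h) (ncard_coverIncidence_right hinj)
    (ncard_coverIncidence_left hinj)

end VoltageCover

section CyclicCover

variable {A B C : Type*} [Finite A] [Finite B] [Finite C]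

theorem exists_isSidonOn_one_mem_holonomy_of_double_edge [Nonempty A] [Nonempty B] [Nontrivial C] :
    ∃ s : A × B × C → ℕ, IsSidonOn s Set.univ ∧
      ∃ a, ∀ d, 1 ∈ holonomy (fun e ↦ (s e : ZMod d)) a := by
  obtain ⟨a⟩ := ‹Nonempty A›
  obtain ⟨b⟩ := ‹Nonempty B›
  obtain ⟨c, c', hc⟩ := exists_pair_ne C
  have hseed : IsSidonOn ![1, 0] Set.univ := by simp only [IsSidonOn, Set.mem_univ]; decide
  have hedges : Function.Injective ![(a, b, c), (a, b, c')] := by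
    simp [Function.Injective, Fin.forall_fin_two, hc, hc.symm]
  obtain ⟨s, hs, hval⟩ := hseed.exists_extension hedges
  refine ⟨s, hs, a, fun d ↦ ?_⟩
  have h₁ : s (a, b, c) = 1 := hval 0
  have h₀ : s (a, b, c') = 0 := hval 1
  simpa [h₁, h₀] using sub_mem_holonomy (fun e ↦ (s e : ZMod d)) a b c c'

theorem exists_isSidonOn_one_mem_holonomy_of_square [Nontrivial A] [Nontrivial B] [Nonempty C] :
    ∃ s : A × B × C → ℕ, IsSidonOn s Set.univ ∧
      ∃ a, ∀ d, 1 ∈ holonomy (fun e ↦ (s e : ZMod d)) a := by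
  obtain ⟨a, a', ha⟩ := exists_pair_ne A
  obtain ⟨b, b', hb⟩ := exists_pair_ne B
  obtain ⟨c⟩ := ‹Nonempty C›
  have hseed : IsSidonOn ![6, 4, 0, 1] Set.univ := by simp only [IsSidonOn, Set.mem_univ]; decide
  have hedges : Function.Injective ![(a, b, c), (a', b, c), (a', b', c), (a, b', c)] := by
    simp [Function.Injective, Fin.forall_fin_succ, ha, ha.symm, hb, hb.symm]
  obtain ⟨s, hs, hval⟩ := hseed.exists_extension hedges
  refine ⟨s, hs, a, fun d ↦ ?_⟩
  have h₆ : s (a, b, c) = 6 := hval 0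
  have h₄ : s (a', b, c) = 4 := hval 1
  have h₀ : s (a', b', c) = 0 := hval 2
  have h₁ : s (a, b', c) = 1 := hval 3
  convert square_mem_holonomy (fun e ↦ (s e : ZMod d)) a a' b b' c
  simp only [h₆, h₄, h₀, h₁]
  push_cast
  ring

theorem exists_forall_configurable_mul_card [Nonempty B] [Nonempty C] {s : A × B × C → ℕ}
    (hs : IsSidonOn s Set.univ) {a : A} (h : ∀ d, 1 ∈ holonomy (fun e ↦ (s e : ZMod d)) a) :
    ∃ N, ∀ d > N, Configurable (d * Nat.card A) (d * Nat.card B)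
      (Nat.card B * Nat.card C) (Nat.card A * Nat.card C) := by
  obtain ⟨m, hm⟩ := (Set.finite_range s).bddAbove
  refine ⟨2 * m, fun d hd ↦ ?_⟩
  have : NeZero d := ⟨by omega⟩
  have htop : holonomy (fun e ↦ (s e : ZMod d)) a = ⊤ := by
    refine (AddSubgroup.eq_top_iff' _).2 fun y ↦ ?_
    simpa using nsmul_mem (h d) y.val
  simpa using configurable_of_isSidonOn
    (hs.natCast_zmod (fun e _ ↦ hm (Set.mem_range_self e)) hd) htop

end CyclicCover

theorem exists_forall_configurable_mul {r k g : ℕ} (hg : 0 < g) (hr : 2 ≤ r * g)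
    (hk : 2 ≤ k * g) : ∃ N, ∀ d > N, Configurable (d * k) (d * r) (r * g) (k * g) := by
  have : NeZero r := ⟨by rintro rfl; simp at hr⟩
  have : NeZero k := ⟨by rintro rfl; simp at hk⟩
  have : NeZero g := ⟨hg.ne'⟩
  obtain ⟨s, hs, a, h⟩ : ∃ s : Fin k × Fin r × Fin g → ℕ, IsSidonOn s Set.univ ∧
      ∃ a, ∀ d, 1 ∈ holonomy (fun e ↦ (s e : ZMod d)) a := by
    obtain rfl | hg := Nat.eq_or_lt_of_le hg
    · have := Fin.nontrivial_iff_two_le.2 (by simpa using hr : 2 ≤ r)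
      have := Fin.nontrivial_iff_two_le.2 (by simpa using hk : 2 ≤ k)
      exact exists_isSidonOn_one_mem_holonomy_of_square
    · have := Fin.nontrivial_iff_two_le.2 hg
      exact exists_isSidonOn_one_mem_holonomy_of_double_edge
  simpa using exists_forall_configurable_mul_card hs h

theorem exists_eq_mul_of_mul_eq_mul_of_coprime {v b r k : ℕ} (hco : r.Coprime k) (hk : 0 < k)
    (h : v * r = b * k) : ∃ d, v = d * k ∧ b = d * r := by
  obtain ⟨d, rfl⟩ := hco.symm.dvd_of_dvd_mul_right (Dvd.intro_left b h.symm)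
  exact ⟨d, mul_comm k d, Nat.eq_of_mul_eq_mul_right hk (by rw [← h]; ring)⟩

/-- For all `r ≥ 2` and `k ≥ 2` there is an `N` such that every tuple
`(v, b, r, k)` with `v, b` positive, `v·r = b·k` and `v ≥ N` is configurable. -/
theorem configurable_of_large (r k : ℕ) (hr : 2 ≤ r) (hk : 2 ≤ k) :
    ∃ N : ℕ, ∀ v b : ℕ, 0 < v → 0 < b → v * r = b * k → N ≤ v →
      Configurable v b r k := by
  obtain ⟨g, r', k', hg, hco, rfl, rfl⟩ :=
    Nat.exists_coprime' (m := r) (n := k) (Nat.gcd_pos_of_pos_left _ (by omega))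
  have hk' : 0 < k' := Nat.pos_of_mul_pos_right (by omega : 0 < k' * g)
  obtain ⟨N, hN⟩ := exists_forall_configurable_mul hg hr hk
  refine ⟨(N + 1) * k', fun v b _ _ hvb hv ↦ ?_⟩
  have hvb' : v * r' = b * k' :=
    Nat.eq_of_mul_eq_mul_right hg (by rw [mul_assoc, hvb, mul_assoc])
  obtain ⟨d, rfl, rfl⟩ := exists_eq_mul_of_mul_eq_mul_of_coprime hco hk' hvb'
  exact hN d (Nat.le_of_mul_le_mul_right hv hk')
end
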